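/- Fix θ₀ = (γ₀, μ₀, σ₀) ∈ (−1/2, ∞) × ℝ × (0, ∞) and define m_θ(x) = 2 log((p_θ(x) + p_{θ₀}(x))/(2 p_{θ₀}(x))) for x with p_{θ₀}(x) > 0, where p_θ is the GEV density. Then there exist a measurable function ṁ : ℝ → [0, ∞) with ∫ ṁ² dP_{θ₀} < ∞ and a neighbourhood V of θ₀ in ℝ × ℝ × (0, ∞) such that |m_{θ₁}(x) − m_{θ₂}(x)| ≤ ṁ(x) ‖θ₁ − θ₂‖ for all θ₁, θ₂ ∈ V and all x with p_{θ₀}(x) > 0. -/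

import Mathlib

open MeasureTheory Filter Set

/-- `u_γ(z)` for the GEV family. -/
noncomputable def gevU (γ z : ℝ) : ℝ :=
  if γ = 0 then Real.exp (-z) else (1 + γ * z) ^ (-γ⁻¹)

/-- Lebesgue density of the GEV distribution with parameter `θ = (γ, μ, σ)`. -/
noncomputable def gevDensity (θ : ℝ × ℝ × ℝ) (x : ℝ) : ℝ :=
  if 0 < θ.2.2 + θ.1 * (x - θ.2.1) then
    (θ.2.2)⁻¹ * Real.exp (-(gevU θ.1 ((x - θ.2.1) / θ.2.2))) *
      gevU θ.1 ((x - θ.2.1) / θ.2.2) ^ (θ.1 + 1)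
  else 0

/-- The GEV probability measure with parameter `θ`. -/
noncomputable def gevMeasure (θ : ℝ × ℝ × ℝ) : Measure ℝ :=
  MeasureTheory.volume.withDensity fun x => ENNReal.ofReal (gevDensity θ x)

/-- The modified criterion function `m_θ = 2 log((p_θ + p_{θ₀})/(2 p_{θ₀}))`
relative to the reference parameter `θ₀` (meaningful where `p_{θ₀} > 0`). -/
noncomputable def gevM (θ₀ θ : ℝ × ℝ × ℝ) (x : ℝ) : ℝ :=
  2 * Real.log ((gevDensity θ x + gevDensity θ₀ x) / (2 * gevDensity θ₀ x))


/-- one-dimensional Lipschitz lemma, one-sided version -/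
lemma lip_aux (f : ℝ → ℝ) (a b c M : ℝ) (hab : a ≤ b) (hM : 0 ≤ M)
    (hf : ContinuousOn f (Icc a b)) (hc : ∀ t ∈ Icc a b, c ≤ f t)
    (hd : ∀ t ∈ Ioo a b, c < f t → ∃ f', HasDerivAt f f' t ∧ |f'| ≤ M) :
    f b - f a ≤ M * (b - a) := by
  by_cases hle : f b ≤ f a
  · have : 0 ≤ M * (b - a) := mul_nonneg hM (by linarith)
    linarith
  push Not at hle
  have hS : IsCompact (Icc a b ∩ f ⁻¹' Iic (f a)) :=
    isCompact_Icc.of_isClosed_subset (hf.preimage_isClosed_of_isClosed isClosed_Icc isClosed_Iic)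
      inter_subset_left
  obtain ⟨s, ⟨hs1, hs2⟩, hs3⟩ := hS.exists_isGreatest ⟨a, ⟨le_rfl, hab⟩, le_refl (f a)⟩
  have hs2 : f s ≤ f a := hs2
  have hsb : s < b := lt_of_le_of_ne hs1.2 (by rintro rfl; linarith)
  have hgt : ∀ t ∈ Ioo s b, f a < f t := by
    intro t ht
    by_contra hcon
    push Not at hcon
    exact absurd (hs3 ⟨⟨hs1.1.trans ht.1.le, ht.2.le⟩, hcon⟩) (not_le.2 ht.1)
  have hd' : ∀ t ∈ Ioo s b, ∃ f', HasDerivAt f f' t ∧ |f'| ≤ M := fun t ht =>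
    hd t ⟨hs1.1.trans_lt ht.1, ht.2⟩ ((hc a ⟨le_rfl, hab⟩).trans_lt (hgt t ht))
  obtain ⟨ξ, hξ, he⟩ := exists_deriv_eq_slope f hsb (hf.mono (Icc_subset_Icc hs1.1 le_rfl))
    (fun t ht => (hd' t ht).choose_spec.1.differentiableAt.differentiableWithinAt)
  obtain ⟨f', h1, h2⟩ := hd' ξ hξ
  rw [h1.deriv, eq_div_iff (by linarith)] at he
  have h3 := (abs_le.1 h2).2
  have := hs1.1
  nlinarith

lemma lip_e (f : ℝ → ℝ) (a b c M : ℝ) (hab : a ≤ b) (hM : 0 ≤ M)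
    (hf : ContinuousOn f (Icc a b)) (hc : ∀ t ∈ Icc a b, c ≤ f t)
    (hd : ∀ t ∈ Ioo a b, c < f t → ∃ f', HasDerivAt f f' t ∧ |f'| ≤ M) :
    |f b - f a| ≤ M * (b - a) := by
  rw [abs_le]
  constructor
  · have := lip_aux (fun t => f (-t)) (-b) (-a) c M (by linarith) hM
      (hf.comp continuous_neg.continuousOn (fun t ht => ⟨by linarith [ht.2], by linarith [ht.1]⟩))
      (fun t ht => hc _ ⟨by linarith [ht.2], by linarith [ht.1]⟩) (by
        intro t ht hct
        obtain ⟨f', h1, h2⟩ := hd (-t) ⟨by linarith [ht.2], by linarith [ht.1]⟩ hct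
        refine ⟨-f', ?_, by rwa [abs_neg]⟩
        have := h1.comp t (hasDerivAt_neg t)
        exact this.congr_deriv (by ring))
    simp only [neg_neg] at this
    linarith
  · exact lip_aux f a b c M hab hM hf hc hd

lemma lip_exc (f : ℝ → ℝ) (a b c M e : ℝ) (hab : a ≤ b) (hM : 0 ≤ M)
    (hf : ContinuousOn f (Icc a b)) (hc : ∀ t ∈ Icc a b, c ≤ f t)
    (hd : ∀ t ∈ Ioo a b, t ≠ e → c < f t → ∃ f', HasDerivAt f f' t ∧ |f'| ≤ M) :
    |f b - f a| ≤ M * (b - a) := by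
  by_cases he : e ∈ Ioo a b
  · have h1 := lip_e f a e c M he.1.le hM (hf.mono (Icc_subset_Icc le_rfl he.2.le))
      (fun t ht => hc t ⟨ht.1, ht.2.trans he.2.le⟩)
      (fun t ht => hd t ⟨ht.1, ht.2.trans he.2⟩ ht.2.ne)
    have h2 := lip_e f e b c M he.2.le hM (hf.mono (Icc_subset_Icc he.1.le le_rfl))
      (fun t ht => hc t ⟨he.1.le.trans ht.1, ht.2⟩)
      (fun t ht => hd t ⟨he.1.trans ht.1, ht.2⟩ ht.1.ne')
    calc |f b - f a| = |(f b - f e) + (f e - f a)| := by ring_nf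
      _ ≤ _ := abs_add_le _ _
      _ ≤ M * (b - a) := by linarith
  · exact lip_e f a b c M hab hM hf hc (fun t ht => hd t ht (fun h => he (h ▸ ht)))

/-- `log(1+y)/y`, extended by continuity -/
noncomputable def gk (y : ℝ) : ℝ := dslope (fun y => Real.log (1 + y)) 0 y

noncomputable def ell (γ z : ℝ) : ℝ := z * gk (γ * z)

lemma hasDerivAt_log1p (y : ℝ) (hy : 0 < 1 + y) :
    HasDerivAt (fun y => Real.log (1 + y)) (1 / (1 + y)) y :=
  ((hasDerivAt_id y).const_add 1).log hy.ne'

lemma gk_zero : gk 0 = 1 := by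
  rw [gk, dslope_same, (hasDerivAt_log1p 0 (by norm_num)).deriv]; norm_num

lemma gk_ne (y : ℝ) (hy : y ≠ 0) : gk y = Real.log (1 + y) / y := by
  rw [gk, dslope_of_ne _ hy, slope_def_field]; simp

lemma gk_cont (y : ℝ) (hy : 0 < 1 + y) : ContinuousAt gk y := by
  have h := (hasDerivAt_log1p y hy)
  by_cases h0 : y = 0
  · subst h0
    exact continuousAt_dslope_same.2 h.differentiableAt
  · exact (continuousAt_dslope_of_ne h0).2 h.continuousAt

lemma ell_zero (z : ℝ) : ell 0 z = z := by simp [ell, gk_zero]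

lemma ell_ne (γ z : ℝ) (hγ : γ ≠ 0) : ell γ z = Real.log (1 + γ * z) / γ := by
  by_cases hz : z = 0
  · simp [ell, hz]
  · rw [ell, gk_ne _ (mul_ne_zero hγ hz)]; field_simp

lemma exp_ell (γ z : ℝ) (h : 0 < 1 + γ * z) : Real.exp (γ * ell γ z) = 1 + γ * z := by
  by_cases hγ : γ = 0
  · simp [hγ]
  · rw [ell_ne _ _ hγ, mul_div_cancel₀ _ hγ, Real.exp_log h]

lemma gevU_eq (γ z : ℝ) (h : 0 < 1 + γ * z) : gevU γ z = Real.exp (-ell γ z) := by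
  unfold gevU
  split_ifs with hγ
  · subst hγ; rw [ell_zero]
  · rw [Real.rpow_def_of_pos h, ell_ne _ _ hγ]; congr 1; field_simp

/-- density in the `ℓ` coordinate -/
noncomputable def pl (γ σ l : ℝ) : ℝ := σ⁻¹ * Real.exp (-Real.exp (-l) - (γ + 1) * l)

lemma pl_pos (γ σ l : ℝ) (hσ : 0 < σ) : 0 < pl γ σ l := by unfold pl; positivity

lemma w_eq (γ μ σ x : ℝ) (hσ : 0 < σ) : σ + γ * (x - μ) = σ * (1 + γ * ((x - μ) / σ)) := by
  field_simp

lemma dens_eq (γ μ σ x : ℝ) (hσ : 0 < σ) (h : 0 < 1 + γ * ((x - μ) / σ)) :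
    gevDensity (γ, μ, σ) x = pl γ σ (ell γ ((x - μ) / σ)) := by
  have h' : 0 < σ + γ * (x - μ) := by rw [w_eq _ _ _ _ hσ]; positivity
  unfold gevDensity
  simp only [h', if_true]
  rw [gevU_eq _ _ h, pl, mul_assoc, ← Real.exp_mul, ← Real.exp_add]
  congr 2; ring

lemma dens_zero (γ μ σ x : ℝ) (hσ : 0 < σ) (h : ¬ 0 < 1 + γ * ((x - μ) / σ)) :
    gevDensity (γ, μ, σ) x = 0 := by
  have h' : ¬ 0 < σ + γ * (x - μ) := by
    rw [w_eq _ _ _ _ hσ]; exact fun hh => h ((mul_pos_iff_of_pos_left hσ).1 hh)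
  unfold gevDensity
  simp only [h', if_false]

lemma dens_pos_iff (γ μ σ x : ℝ) (hσ : 0 < σ) :
    0 < gevDensity (γ, μ, σ) x ↔ 0 < 1 + γ * ((x - μ) / σ) := by
  by_cases h : 0 < 1 + γ * ((x - μ) / σ)
  · simp only [h, dens_eq _ _ _ _ hσ h, pl_pos _ _ _ hσ]
  · simp [h, dens_zero _ _ _ _ hσ h]

lemma dens_nonneg (γ μ σ x : ℝ) (hσ : 0 < σ) : 0 ≤ gevDensity (γ, μ, σ) x := by
  by_cases h : 0 < 1 + γ * ((x - μ) / σ)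
  · exact ((dens_pos_iff _ _ _ _ hσ).2 h).le
  · exact (dens_zero _ _ _ _ hσ h).ge

lemma ell_deriv_z (γ z : ℝ) (h : 0 < 1 + γ * z) :
    HasDerivAt (ell γ) (1 / (1 + γ * z)) z := by
  by_cases hγ : γ = 0
  · subst hγ
    have : ell 0 = id := by funext z; simp [ell_zero]
    rw [this]; simpa using hasDerivAt_id z
  · have : ell γ = fun z => Real.log (1 + γ * z) / γ := by funext z; exact ell_ne _ _ hγ
    rw [this]
    have h1 : HasDerivAt (fun z => 1 + γ * z) γ z := by
      simpa using ((hasDerivAt_id z).const_mul γ).const_add 1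
    refine ((h1.log h.ne').div_const γ).congr_deriv ?_
    field_simp

lemma ell_deriv_g (γ z : ℝ) (hγ : γ ≠ 0) (h : 0 < 1 + γ * z) :
    HasDerivAt (fun g => ell g z) ((γ * z / (1 + γ * z) - Real.log (1 + γ * z)) / γ ^ 2) γ := by
  have : (fun g => ell g z) =ᶠ[nhds γ] fun g => Real.log (1 + g * z) / g := by
    filter_upwards [isOpen_ne.mem_nhds hγ] with g hg
    exact ell_ne _ _ hg
  refine HasDerivAt.congr_of_eventuallyEq ?_ this
  have h1 : HasDerivAt (fun g => 1 + g * z) z γ := by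
    simpa using ((hasDerivAt_id γ).mul_const z).const_add 1
  refine ((h1.log h.ne').div (hasDerivAt_id' γ) hγ).congr_deriv ?_
  field_simp

lemma ell_cont (q : ℝ × ℝ) (h : 0 < 1 + q.1 * q.2) :
    ContinuousAt (fun q : ℝ × ℝ => ell q.1 q.2) q := by
  unfold ell
  have h2 : ContinuousAt (fun q : ℝ × ℝ => q.1 * q.2) q := by fun_prop
  exact continuousAt_snd.mul (ContinuousAt.comp (gk_cont _ h) h2)

lemma exp_bd1 (s : ℝ) : |1 - Real.exp (-s)| ≤ |s| * (1 + Real.exp (-s)) := by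
  have h1 := Real.add_one_le_exp s
  have h2 := Real.add_one_le_exp (-s)
  have h3 : Real.exp s * Real.exp (-s) = 1 := by rw [← Real.exp_add]; simp
  have hp := Real.exp_pos s
  have hn := Real.exp_pos (-s)
  rcases le_total 0 s with hs | hs
  · rw [abs_of_nonneg hs, abs_le]; constructor <;> nlinarith
  · rw [abs_of_nonpos hs, abs_le]; constructor <;> nlinarith

lemma exp_bd2 (s : ℝ) : |1 - Real.exp (-s) - s| ≤ s ^ 2 * (1 + Real.exp (-s)) := by
  have h1 := Real.add_one_le_exp s
  have h2 := Real.add_one_le_exp (-s)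
  have h3 : Real.exp s * Real.exp (-s) = 1 := by rw [← Real.exp_add]; simp
  have hp := Real.exp_pos s
  have hn := Real.exp_pos (-s)
  have h4 : (1 + s) * Real.exp (-s) ≤ 1 := by nlinarith
  rw [abs_le]
  constructor
  · rcases le_total 0 s with hs | hs
    · nlinarith [mul_nonneg hs hn.le, mul_nonneg (sq_nonneg s) hn.le]
    · have h5 : Real.exp (-s) - 1 + s ≤ (-s) * (Real.exp (-s) - 1) := by nlinarith
      have h6 : Real.exp (-s) - 1 ≤ (-s) * Real.exp (-s) := by nlinarith
      nlinarith [mul_le_mul_of_nonneg_left h6 (neg_nonneg.2 hs), sq_nonneg s]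
  · nlinarith [mul_nonneg (sq_nonneg s) hn.le, sq_nonneg s]

lemma inv_w (γ z : ℝ) (h : 0 < 1 + γ * z) : 1 / (1 + γ * z) = Real.exp (-(γ * ell γ z)) := by
  rw [Real.exp_neg, exp_ell _ _ h, one_div]

lemma z_bd (γ z : ℝ) (h : 0 < 1 + γ * z) :
    |z| * (1 / (1 + γ * z)) ≤ |ell γ z| * (1 + Real.exp (-(γ * ell γ z))) := by
  by_cases hγ : γ = 0
  · subst hγ; simp [ell_zero]; nlinarith [abs_nonneg z]
  have h1 := exp_bd1 (γ * ell γ z)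
  rw [← inv_w _ _ h] at *
  have : 1 - 1 / (1 + γ * z) = γ * (z * (1 / (1 + γ * z))) := by field_simp; ring
  rw [this, abs_mul, abs_mul, abs_mul, mul_assoc, abs_of_pos (one_div_pos.2 h)] at h1
  exact le_of_mul_le_mul_left h1 (abs_pos.2 hγ)

lemma g_bd (γ z : ℝ) (hγ : γ ≠ 0) (h : 0 < 1 + γ * z) :
    |(γ * z / (1 + γ * z) - Real.log (1 + γ * z)) / γ ^ 2| ≤
      ell γ z ^ 2 * (1 + Real.exp (-(γ * ell γ z))) := by
  have h1 := exp_bd2 (γ * ell γ z)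
  have h2 : Real.log (1 + γ * z) = γ * ell γ z := by
    rw [← exp_ell _ _ h, Real.log_exp]
  have h3 : γ * z / (1 + γ * z) = 1 - 1 / (1 + γ * z) := by field_simp; ring
  rw [h3, inv_w _ _ h, h2, abs_div, div_le_iff₀ (by positivity)]
  calc _ ≤ _ := h1
    _ = _ := by rw [abs_of_pos (by positivity)]; ring

lemma pl_deriv (g s l : ℝ → ℝ) (g' s' l' t : ℝ) (hs : 0 < s t)
    (h1 : HasDerivAt g g' t) (h2 : HasDerivAt s s' t) (h3 : HasDerivAt l l' t) :
    HasDerivAt (fun t => pl (g t) (s t) (l t))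
      (pl (g t) (s t) (l t) *
        (-s' / s t + Real.exp (-l t) * l' - (g t + 1) * l' - g' * l t)) t := by
  unfold pl
  have := (h2.inv hs.ne').mul ((((h3.neg).exp.neg).sub ((h1.add_const 1).mul h3)).exp)
  refine this.congr_deriv ?_
  simp only [Pi.neg_apply, Pi.sub_apply, Pi.mul_apply, Pi.inv_apply]
  field_simp
  ring

noncomputable def TT (γ l : ℝ) : ℝ :=
  (1 + Real.exp (-l)) * (1 + Real.exp (-(γ * l))) * (1 + l ^ 2)

lemma TT_pos (γ l : ℝ) : 0 < TT γ l := by unfold TT; positivity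

lemma kt_bd (K κ t : ℝ) (hK : 0 < K) (hκ : 0 < κ) :
    K * t - κ * Real.exp t ≤ K * Real.log (K / κ) - K := by
  have h := Real.add_one_le_exp (t - Real.log (K / κ))
  rw [Real.exp_sub, Real.exp_log (by positivity), le_div_iff₀ (by positivity)] at h
  have h2 : (t - Real.log (K / κ) + 1) * (K / κ) * κ ≤ Real.exp t * κ :=
    mul_le_mul_of_nonneg_right h hκ.le
  rw [mul_assoc, div_mul_cancel₀ _ hκ.ne'] at h2
  linarith

lemma pl_rpow (γ σ l κ s : ℝ) (hs : 0 < s) (hσ : s ≤ σ) (hκ : 0 ≤ κ) :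
    pl γ σ l ^ κ ≤ s⁻¹ ^ κ * Real.exp (κ * (-Real.exp (-l) - (γ + 1) * l)) := by
  have hσ' := hs.trans_le hσ
  unfold pl
  rw [Real.mul_rpow (by positivity) (by positivity), ← Real.exp_mul, mul_comm κ]
  gcongr

lemma bdA (κ s Γ : ℝ) (hκ : 0 < κ) (hs : 0 < s) (hΓ : 0 ≤ Γ) :
    ∃ C, 0 < C ∧ ∀ γ σ l, |γ| ≤ Γ → s ≤ σ → l ≤ 0 → TT γ l * pl γ σ l ^ κ ≤ C := by
  set K := 2 + Γ + κ * (Γ + 1) with hK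
  have hK0 : 0 < K := by positivity
  refine ⟨s⁻¹ ^ κ * (8 * Real.exp (K * Real.log (K / κ) - K)), by positivity, ?_⟩
  intro γ σ l hγ hσ hl
  have hp := pl_rpow γ σ l κ s hs hσ hκ.le
  have hg := abs_le.1 hγ
  have h1 : 1 + Real.exp (-l) ≤ 2 * Real.exp (-l) := by
    have := Real.one_le_exp (x := -l) (by linarith); linarith
  have h2 : 1 + Real.exp (-(γ * l)) ≤ 2 * Real.exp (Γ * (-l)) := by
    have h := Real.one_le_exp (x := Γ * (-l)) (mul_nonneg hΓ (by linarith))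
    have h' : Real.exp (-(γ * l)) ≤ Real.exp (Γ * (-l)) := Real.exp_le_exp.2 (by nlinarith)
    linarith
  have h3 : 1 + l ^ 2 ≤ 2 * Real.exp (-l) := by
    have := Real.quadratic_le_exp_of_nonneg (x := -l) (by linarith)
    nlinarith
  have h4 := kt_bd K κ (-l) hK0 hκ
  have hpl : 0 ≤ pl γ σ l ^ κ := Real.rpow_nonneg (pl_pos _ _ _ (hs.trans_le hσ)).le _
  calc TT γ l * pl γ σ l ^ κ
      ≤ ((2 * Real.exp (-l)) * (2 * Real.exp (Γ * (-l))) * (2 * Real.exp (-l))) *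
        (s⁻¹ ^ κ * Real.exp (κ * (-Real.exp (-l) - (γ + 1) * l))) := by
        unfold TT; gcongr
    _ = s⁻¹ ^ κ * (8 * Real.exp ((-l) + Γ * (-l) + (-l) +
          κ * (-Real.exp (-l) - (γ + 1) * l))) := by
        rw [Real.exp_add, Real.exp_add, Real.exp_add]; ring
    _ ≤ _ := by
        gcongr
        refine le_trans ?_ h4
        have : κ * (γ * -l) ≤ κ * (Γ * -l) := by
          apply mul_le_mul_of_nonneg_left _ hκ.le
          exact mul_le_mul_of_nonneg_right hg.2 (by linarith)
        rw [hK]; nlinarith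

lemma bdB (κ s δ : ℝ) (hκ : 0 < κ) (hs : 0 < s) (hδ : 0 < δ) :
    ∃ C, 0 < C ∧ ∀ γ σ l, -γ + δ ≤ κ * (γ + 1) → δ ≤ κ * (γ + 1) → s ≤ σ → 0 ≤ l →
      TT γ l * pl γ σ l ^ κ ≤ C := by
  refine ⟨s⁻¹ ^ κ * (4 * (1 + 2 / δ ^ 2)), by positivity, ?_⟩
  intro γ σ l hγ1 hγ2 hσ hl
  have hp := pl_rpow γ σ l κ s hs hσ hκ.le
  have h1 : 1 + Real.exp (-l) ≤ 2 := by
    have := Real.exp_le_one_iff (x := -l).2 (by linarith); linarith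
  have h3 : 1 + l ^ 2 ≤ (1 + 2 / δ ^ 2) * Real.exp (δ * l) := by
    have h := Real.quadratic_le_exp_of_nonneg (x := δ * l) (by positivity)
    have h0 : 0 ≤ δ * l := by positivity
    have h5 : 1 + l ^ 2 ≤ (1 + 2 / δ ^ 2) * (1 + (δ * l) ^ 2 / 2) := by
      have : (1 + 2 / δ ^ 2) * (1 + (δ * l) ^ 2 / 2) =
        1 + l ^ 2 + (2 / δ ^ 2 + (δ * l) ^ 2 / 2) := by field_simp; ring
      rw [this]
      have : 0 ≤ 2 / δ ^ 2 + (δ * l) ^ 2 / 2 := by positivity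
      linarith
    refine h5.trans ?_
    gcongr
    linarith
  have h4 : Real.exp (κ * (-Real.exp (-l) - (γ + 1) * l)) ≤ Real.exp (-(κ * (γ + 1) * l)) := by
    apply Real.exp_le_exp.2
    have : 0 ≤ κ * Real.exp (-l) := by positivity
    nlinarith
  have h5 : (1 + Real.exp (-(γ * l))) * (Real.exp (δ * l) * Real.exp (-(κ * (γ + 1) * l))) ≤ 2 := by
    have e1 : Real.exp (δ * l) * Real.exp (-(κ * (γ + 1) * l)) ≤ 1 := by
      rw [← Real.exp_add]; apply Real.exp_le_one_iff.2; nlinarith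
    have e2 : Real.exp (-(γ * l)) * (Real.exp (δ * l) * Real.exp (-(κ * (γ + 1) * l))) ≤ 1 := by
      rw [← Real.exp_add, ← Real.exp_add]; apply Real.exp_le_one_iff.2; nlinarith
    linarith
  have hpl : 0 ≤ pl γ σ l ^ κ := Real.rpow_nonneg (pl_pos _ _ _ (hs.trans_le hσ)).le _
  calc TT γ l * pl γ σ l ^ κ
      ≤ (2 * (1 + Real.exp (-(γ * l))) * ((1 + 2 / δ ^ 2) * Real.exp (δ * l))) *
        (s⁻¹ ^ κ * Real.exp (-(κ * (γ + 1) * l))) := by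
        unfold TT
        gcongr
        exact hp.trans (by gcongr)
    _ = s⁻¹ ^ κ * (2 * (1 + 2 / δ ^ 2)) *
        ((1 + Real.exp (-(γ * l))) * (Real.exp (δ * l) * Real.exp (-(κ * (γ + 1) * l)))) := by ring
    _ ≤ s⁻¹ ^ κ * (2 * (1 + 2 / δ ^ 2)) * 2 := by gcongr
    _ = _ := by ring

lemma interp (T P q κ C : ℝ) (hP : 0 < P) (hq : 0 < q) (hκ : 0 ≤ κ) (hκ1 : κ ≤ 1)
    (hC : 0 ≤ C) (h : T * P ^ κ ≤ C) : T * P ≤ C * q ^ (-κ) * (P + q) := by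
  have hg := Real.geom_mean_le_arith_mean2_weighted (w₁ := 1 - κ) (w₂ := κ) (p₁ := P) (p₂ := q)
    (by linarith) hκ hP.le hq.le (by ring)
  have h1 : P ^ (1 - κ) * q ^ κ ≤ P + q := by nlinarith
  have h2 : P = P ^ κ * P ^ (1 - κ) := by rw [← Real.rpow_add hP]; simp
  have h3 : q ^ (-κ) * q ^ κ = 1 := by rw [← Real.rpow_add hq]; simp
  have hqn : 0 < q ^ (-κ) := by positivity
  calc T * P = (T * P ^ κ) * P ^ (1 - κ) := by rw [mul_assoc, ← h2]
    _ ≤ C * P ^ (1 - κ) := by gcongr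
    _ = C * q ^ (-κ) * (P ^ (1 - κ) * q ^ κ) := by
        rw [show C * q ^ (-κ) * (P ^ (1 - κ) * q ^ κ) = C * P ^ (1 - κ) * (q ^ (-κ) * q ^ κ) by ring,
          h3, mul_one]
    _ ≤ _ := by gcongr

lemma dens_le (Γ : ℝ) (hΓ : 0 ≤ Γ) : ∃ C, 0 < C ∧ ∀ γ μ σ x, |γ| ≤ Γ → -(1/2) ≤ γ → 0 < σ →
    gevDensity (γ, μ, σ) x ≤ C * σ⁻¹ * max 0 (1 + γ * ((x - μ) / σ)) := by
  set K := 2 * Γ + 1 with hK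
  have hK0 : 0 < K := by positivity
  refine ⟨Real.exp (max 0 (K * Real.log (K / 1) - K)), by positivity, ?_⟩
  intro γ μ σ x hγ hγ2 hσ
  by_cases h : 0 < 1 + γ * ((x - μ) / σ)
  · rw [dens_eq _ _ _ _ hσ h, max_eq_right h.le, ← exp_ell _ _ h, pl]
    set l := ell γ ((x - μ) / σ)
    rw [mul_comm _ σ⁻¹, mul_assoc, ← Real.exp_add]
    have hg := abs_le.1 hγ
    gcongr
    rcases le_total 0 l with hl | hl
    · have := le_max_left 0 (K * Real.log (K / 1) - K)
      have := Real.exp_pos (-l)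
      nlinarith
    · have := le_max_right 0 (K * Real.log (K / 1) - K)
      have := kt_bd K 1 (-l) hK0 one_pos
      nlinarith
  · rw [dens_zero _ _ _ _ hσ h]; positivity

lemma dens_cont (x : ℝ) (θ : ℝ × ℝ × ℝ) (hγ : -(1/2) < θ.1) (hσ : 0 < θ.2.2) :
    ContinuousAt (fun θ => gevDensity θ x) θ := by
  have hw : ContinuousAt (fun θ : ℝ × ℝ × ℝ => 1 + θ.1 * ((x - θ.2.1) / θ.2.2)) θ := by
    have := hσ.ne'
    fun_prop (disch := assumption)
  have eσ : ∀ᶠ θ' : ℝ × ℝ × ℝ in nhds θ, 0 < θ'.2.2 :=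
    (by fun_prop : ContinuousAt (fun θ : ℝ × ℝ × ℝ => θ.2.2) θ).eventually (lt_mem_nhds hσ)
  by_cases h : 0 < 1 + θ.1 * ((x - θ.2.1) / θ.2.2)
  · have ew := hw.eventually (lt_mem_nhds h)
    have hE : (fun θ => gevDensity θ x) =ᶠ[nhds θ]
        fun θ => pl θ.1 θ.2.2 (ell θ.1 ((x - θ.2.1) / θ.2.2)) := by
      filter_upwards [eσ, ew] with θ' h1 h2
      exact dens_eq _ _ _ _ h1 h2
    refine ContinuousAt.congr ?_ hE.symm
    have hl : ContinuousAt (fun θ : ℝ × ℝ × ℝ => ell θ.1 ((x - θ.2.1) / θ.2.2)) θ := by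
      have h2 : ContinuousAt (fun θ : ℝ × ℝ × ℝ => (θ.1, ((x - θ.2.1) / θ.2.2))) θ := by
        have := hσ.ne'
        fun_prop (disch := assumption)
      exact ContinuousAt.comp (f := fun θ : ℝ × ℝ × ℝ => (θ.1, ((x - θ.2.1) / θ.2.2)))
        (ell_cont (θ.1, ((x - θ.2.1) / θ.2.2)) h) h2
    unfold pl
    have := hσ.ne'
    fun_prop (disch := assumption)
  · obtain ⟨C, hC, hb⟩ := dens_le (|θ.1| + 1) (by positivity)
    have h0 : gevDensity θ x = 0 := dens_zero _ _ _ _ hσ h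
    have eγ : ∀ᶠ θ' : ℝ × ℝ × ℝ in nhds θ, -(1/2) < θ'.1 :=
      continuousAt_fst.eventually (lt_mem_nhds hγ)
    have eΓ : ∀ᶠ θ' : ℝ × ℝ × ℝ in nhds θ, |θ'.1| < |θ.1| + 1 :=
      (by fun_prop : ContinuousAt (fun θ : ℝ × ℝ × ℝ => |θ.1|) θ).eventually
        (gt_mem_nhds (by simp))
    have hR : Tendsto (fun θ' : ℝ × ℝ × ℝ => C * θ'.2.2⁻¹ *
        max 0 (1 + θ'.1 * ((x - θ'.2.1) / θ'.2.2))) (nhds θ) (nhds 0) := by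
      have hc : ContinuousAt (fun θ' : ℝ × ℝ × ℝ => C * θ'.2.2⁻¹ *
        max 0 (1 + θ'.1 * ((x - θ'.2.1) / θ'.2.2))) θ := by
        have := hσ.ne'
        fun_prop (disch := assumption)
      have := hc.tendsto
      rwa [max_eq_left (not_lt.1 h), mul_zero] at this
    rw [ContinuousAt, h0]
    refine tendsto_of_tendsto_of_tendsto_of_le_of_le' tendsto_const_nhds hR ?_ ?_
    · filter_upwards [eσ] with θ' h1
      exact dens_nonneg _ _ _ _ h1
    · filter_upwards [eσ, eγ, eΓ] with θ' h1 h2 h3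
      exact hb _ _ _ _ h3.le h2.le h1

lemma step_log (P : ℝ → ℝ) (a b q M e : ℝ) (hab : a ≤ b) (hM : 0 ≤ M) (hq : 0 < q)
    (hP : ContinuousOn P (Icc a b)) (hP0 : ∀ t ∈ Icc a b, 0 ≤ P t)
    (hd : ∀ t ∈ Ioo a b, t ≠ e → 0 < P t → ∃ P', HasDerivAt P P' t ∧ |P'| ≤ M * (P t + q)) :
    |Real.log ((P b + q) / (2 * q)) - Real.log ((P a + q) / (2 * q))| ≤ M * (b - a) := by
  refine lip_exc (fun t => Real.log ((P t + q) / (2 * q))) a b (Real.log (q / (2 * q))) M e hab hM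
    ?_ ?_ ?_
  · refine ContinuousOn.log (by fun_prop) ?_
    intro t ht
    have := hP0 t ht
    positivity
  · intro t ht
    have := hP0 t ht
    apply Real.log_le_log (by positivity)
    gcongr
    linarith
  · intro t ht hte hlt
    have h0 := hP0 t ⟨ht.1.le, ht.2.le⟩
    have hpos : 0 < P t := by
      rcases h0.lt_or_eq with h | h
      · exact h
      · rw [← h, zero_add] at hlt; exact absurd hlt (lt_irrefl _)
    obtain ⟨P', h1, h2⟩ := hd t ht hte hpos
    have h3 : 0 < P t + q := by linarith
    refine ⟨P' / (P t + q), ?_, ?_⟩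
    · refine (((h1.add_const q).div_const (2 * q)).log (by positivity)).congr_deriv ?_
      field_simp
    · rw [abs_div, abs_of_pos h3, div_le_iff₀ h3]; exact h2

lemma score_g (γ l d Γ : ℝ) (hγ : |γ| ≤ Γ) (hd : |d| ≤ l ^ 2 * (1 + Real.exp (-(γ * l)))) :
    |Real.exp (-l) * d - (γ + 1) * d - l| ≤ (Γ + 2) * TT γ l := by
  have hE := Real.exp_pos (-l)
  have hG := Real.exp_pos (-(γ * l))
  have hg := abs_le.1 hγ
  have hΓ : 0 ≤ Γ := (abs_nonneg _).trans hγ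
  have h1 : |Real.exp (-l) * d - (γ + 1) * d - l| ≤ (Γ + 1) * (1 + Real.exp (-l)) * |d| + |l| := by
    calc _ ≤ |Real.exp (-l) * d - (γ + 1) * d| + |l| := abs_sub _ _
      _ = |Real.exp (-l) - (γ + 1)| * |d| + |l| := by rw [← sub_mul, abs_mul]
      _ ≤ _ := by
        gcongr
        rw [abs_le]; constructor <;> nlinarith
  have h2 : |l| ≤ 1 + l ^ 2 := by rw [abs_le]; constructor <;> nlinarith [sq_nonneg (l - 1), sq_nonneg (l + 1)]
  have h3 : 1 + l ^ 2 ≤ TT γ l := by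
    unfold TT
    have : 1 ≤ (1 + Real.exp (-l)) * (1 + Real.exp (-(γ * l))) := by nlinarith [mul_pos hE hG]
    nlinarith [sq_nonneg l]
  have h4 : (1 + Real.exp (-l)) * |d| ≤ TT γ l := by
    calc _ ≤ (1 + Real.exp (-l)) * (l ^ 2 * (1 + Real.exp (-(γ * l)))) := by gcongr
      _ ≤ (1 + Real.exp (-l)) * ((1 + l ^ 2) * (1 + Real.exp (-(γ * l)))) := by gcongr; linarith
      _ = _ := by unfold TT; ring
  nlinarith

lemma score_ms (γ l d Γ a D S : ℝ) (hγ : |γ| ≤ Γ) (hD : 0 ≤ D) (hS : 0 ≤ S) (ha : |a| ≤ D * S)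
    (hd : |d| ≤ D * S * ((1 + |l|) * (1 + Real.exp (-(γ * l))))) :
    |a + Real.exp (-l) * d - (γ + 1) * d| ≤ (2 * Γ + 3) * S * TT γ l * D := by
  have hE := Real.exp_pos (-l)
  have hG := Real.exp_pos (-(γ * l))
  have hg := abs_le.1 hγ
  have hΓ : 0 ≤ Γ := (abs_nonneg _).trans hγ
  have h1 : |a + Real.exp (-l) * d - (γ + 1) * d| ≤ |a| + (Γ + 1) * ((1 + Real.exp (-l)) * |d|) := by
    calc _ = |a + (Real.exp (-l) - (γ + 1)) * d| := by ring_nf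
      _ ≤ |a| + |Real.exp (-l) - (γ + 1)| * |d| := by rw [← abs_mul]; exact abs_add_le _ _
      _ ≤ _ := by
        rw [← mul_assoc]
        gcongr
        rw [abs_le]; constructor <;> nlinarith
  have h2 : |l| ≤ 1 + l ^ 2 := by rw [abs_le]; constructor <;> nlinarith [sq_nonneg (l - 1), sq_nonneg (l + 1)]
  have h3 : 1 ≤ TT γ l := by
    unfold TT
    have : 1 ≤ (1 + Real.exp (-l)) * (1 + Real.exp (-(γ * l))) := by nlinarith [mul_pos hE hG]
    nlinarith [sq_nonneg l]
  have hDS : 0 ≤ D * S := by positivity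
  have h4 : (1 + Real.exp (-l)) * |d| ≤ D * S * (2 * TT γ l) := by
    calc _ ≤ (1 + Real.exp (-l)) * (D * S * ((1 + |l|) * (1 + Real.exp (-(γ * l))))) := by gcongr
      _ ≤ (1 + Real.exp (-l)) * (D * S * ((2 * (1 + l ^ 2)) * (1 + Real.exp (-(γ * l))))) := by
        gcongr; nlinarith [sq_nonneg l]
      _ = _ := by unfold TT; ring
  have h5 : (Γ + 1) * ((1 + Real.exp (-l)) * |d|) ≤ (Γ + 1) * (D * S * (2 * TT γ l)) := by gcongr
  have h6 : D * S * 1 ≤ D * S * TT γ l := by gcongr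
  nlinarith

lemma step_g (x μ σ γ1 γ2 q M Γ : ℝ) (h12 : γ1 ≤ γ2) (hσ : 0 < σ) (hγ : -(1/2) < γ1)
    (hΓ0 : 0 ≤ Γ) (hΓ : ∀ γ ∈ Icc γ1 γ2, |γ| ≤ Γ) (hq : 0 < q) (hM : 0 ≤ M)
    (H : ∀ γ ∈ Icc γ1 γ2, 0 < 1 + γ * ((x - μ) / σ) →
      TT γ (ell γ ((x - μ) / σ)) * pl γ σ (ell γ ((x - μ) / σ)) ≤
        M * (pl γ σ (ell γ ((x - μ) / σ)) + q)) :
    |Real.log ((gevDensity (γ2, μ, σ) x + q) / (2 * q)) -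
      Real.log ((gevDensity (γ1, μ, σ) x + q) / (2 * q))| ≤ (Γ + 2) * M * (γ2 - γ1) := by
  refine step_log (fun γ => gevDensity (γ, μ, σ) x) γ1 γ2 q ((Γ + 2) * M) 0 h12 (by positivity) hq
    ?_ (fun t _ => dens_nonneg _ _ _ _ hσ) ?_
  · intro γ hγ'
    have h2 : ContinuousAt (fun γ : ℝ => (γ, μ, σ)) γ := by fun_prop
    exact (ContinuousAt.comp (f := fun γ : ℝ => (γ, μ, σ))
      (dens_cont x (γ, μ, σ) (hγ.trans_le hγ'.1) hσ) h2).continuousWithinAt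
  · intro γ hγ' hne hpos
    have hw := (dens_pos_iff _ _ _ _ hσ).1 hpos
    set z := (x - μ) / σ with hz
    have hcw : ContinuousAt (fun γ : ℝ => 1 + γ * z) γ := by fun_prop
    have ew := hcw.eventually (lt_mem_nhds hw)
    have hE : (fun γ => gevDensity (γ, μ, σ) x) =ᶠ[nhds γ] fun γ => pl γ σ (ell γ z) := by
      filter_upwards [ew] with g hg
      exact dens_eq _ _ _ _ hσ hg
    have hd := pl_deriv (fun γ => γ) (fun _ => σ) (fun γ => ell γ z) 1 0 _ γ hσ (hasDerivAt_id' γ)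
      (hasDerivAt_const γ σ) (ell_deriv_g γ z hne hw)
    refine ⟨_, hd.congr_of_eventuallyEq hE, ?_⟩
    have hb := score_g γ (ell γ z) _ Γ (hΓ γ ⟨hγ'.1.le, hγ'.2.le⟩) (g_bd γ z hne hw)
    have hH := H γ ⟨hγ'.1.le, hγ'.2.le⟩ hw
    have hp := pl_pos γ σ (ell γ z) hσ
    simp only [dens_eq γ μ σ x hσ hw]
    rw [abs_mul, abs_of_pos hp, neg_zero, zero_div, zero_add, one_mul]
    calc _ ≤ pl γ σ (ell γ z) * ((Γ + 2) * TT γ (ell γ z)) := by gcongr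
      _ = (Γ + 2) * (TT γ (ell γ z) * pl γ σ (ell γ z)) := by ring
      _ ≤ (Γ + 2) * (M * (pl γ σ (ell γ z) + q)) := by gcongr
      _ = _ := by rw [← hz]; ring

lemma step_ms (x γ μ1 μ2 σ1 σ2 q M Γ D S : ℝ) (hγ : -(1/2) < γ) (hΓ : |γ| ≤ Γ)
    (hσ : ∀ t ∈ Icc (0:ℝ) 1, 0 < σ1 + t * (σ2 - σ1))
    (hS : ∀ t ∈ Icc (0:ℝ) 1, (σ1 + t * (σ2 - σ1))⁻¹ ≤ S)
    (hD1 : |μ2 - μ1| ≤ D) (hD2 : |σ2 - σ1| ≤ D) (hq : 0 < q) (hM : 0 ≤ M)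
    (H : ∀ t ∈ Icc (0:ℝ) 1, ∀ μ σ, μ = μ1 + t * (μ2 - μ1) → σ = σ1 + t * (σ2 - σ1) →
      0 < 1 + γ * ((x - μ) / σ) →
      TT γ (ell γ ((x - μ) / σ)) * pl γ σ (ell γ ((x - μ) / σ)) ≤
        M * (pl γ σ (ell γ ((x - μ) / σ)) + q)) :
    |Real.log ((gevDensity (γ, μ2, σ2) x + q) / (2 * q)) -
      Real.log ((gevDensity (γ, μ1, σ1) x + q) / (2 * q))| ≤ (2 * Γ + 3) * S * M * D := by
  have hD : 0 ≤ D := (abs_nonneg _).trans hD1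
  have hΓ0 : 0 ≤ Γ := (abs_nonneg _).trans hΓ
  have hS0 : 0 ≤ S := (inv_pos.2 (hσ 0 (by simp))).le.trans (hS 0 (by simp))
  have key := step_log (fun t => gevDensity (γ, μ1 + t * (μ2 - μ1), σ1 + t * (σ2 - σ1)) x) 0 1 q
    ((2 * Γ + 3) * S * M * D) (-1) zero_le_one (by positivity) hq
    ?_ (fun t ht => dens_nonneg _ _ _ _ (hσ t ht)) ?_
  · simpa using key
  · intro t ht
    have h2 : ContinuousAt (fun t : ℝ => (γ, μ1 + t * (μ2 - μ1), σ1 + t * (σ2 - σ1))) t := by fun_prop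
    exact (ContinuousAt.comp (f := fun t : ℝ => (γ, μ1 + t * (μ2 - μ1), σ1 + t * (σ2 - σ1)))
      (dens_cont x (γ, μ1 + t * (μ2 - μ1), σ1 + t * (σ2 - σ1)) hγ (hσ t ht)) h2).continuousWithinAt
  · intro t ht' _ hpos
    have ht : t ∈ Icc (0:ℝ) 1 := ⟨ht'.1.le, ht'.2.le⟩
    have hst := hσ t ht
    have hw := (dens_pos_iff _ _ _ _ hst).1 hpos
    have hH := H t ht _ _ rfl rfl hw
    have hSt := hS t ht
    have hμd : HasDerivAt (fun t => μ1 + t * (μ2 - μ1)) (μ2 - μ1) t := by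
      simpa using ((hasDerivAt_id' t).mul_const (μ2 - μ1)).const_add μ1
    have hσd : HasDerivAt (fun t => σ1 + t * (σ2 - σ1)) (σ2 - σ1) t := by
      simpa using ((hasDerivAt_id' t).mul_const (σ2 - σ1)).const_add σ1
    have hzd := (hμd.const_sub x).div hσd hst.ne'
    have hld := HasDerivAt.comp t (ell_deriv_z γ _ hw) hzd
    have hd := pl_deriv (fun _ => γ) _ _ 0 _ _ t hst (hasDerivAt_const t γ) hσd hld
    have hE : (fun t => gevDensity (γ, μ1 + t * (μ2 - μ1), σ1 + t * (σ2 - σ1)) x) =ᶠ[nhds t]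
        fun t => pl γ (σ1 + t * (σ2 - σ1))
          (ell γ ((x - (μ1 + t * (μ2 - μ1))) / (σ1 + t * (σ2 - σ1)))) := by
      have e1 := hσd.continuousAt.eventually (lt_mem_nhds hst)
      have hcw : ContinuousAt (fun t : ℝ =>
          1 + γ * ((x - (μ1 + t * (μ2 - μ1))) / (σ1 + t * (σ2 - σ1)))) t := by
        have := hst.ne'
        fun_prop (disch := assumption)
      have e2 := hcw.eventually (lt_mem_nhds hw)
      filter_upwards [e1, e2] with g hg1 hg2
      exact dens_eq _ _ _ _ hg1 hg2
    refine ⟨_, hd.congr_of_eventuallyEq hE, ?_⟩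
    simp only [dens_eq γ _ _ x hst hw, Function.comp, Pi.div_apply]
    set σ := σ1 + t * (σ2 - σ1) with hσe
    set μ := μ1 + t * (μ2 - μ1) with hμe
    set z := (x - μ) / σ with hz
    have hp := pl_pos γ σ (ell γ z) hst
    have hiw := inv_w γ z hw
    have hzb := z_bd γ z hw
    have hiw0 : 0 < 1 / (1 + γ * z) := one_div_pos.2 hw
    have hb := score_ms γ (ell γ z)
      (1 / (1 + γ * z) * ((-(μ2 - μ1) * σ - (x - μ) * (σ2 - σ1)) / σ ^ 2)) Γ
      (-(σ2 - σ1) / σ) D S hΓ hD hS0 ?_ ?_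
    · rw [abs_mul, abs_of_pos hp, zero_mul, sub_zero]
      calc _ ≤ pl γ σ (ell γ z) * ((2 * Γ + 3) * S * TT γ (ell γ z) * D) := by gcongr
        _ = (2 * Γ + 3) * S * D * (TT γ (ell γ z) * pl γ σ (ell γ z)) := by ring
        _ ≤ (2 * Γ + 3) * S * D * (M * (pl γ σ (ell γ z) + q)) := by gcongr
        _ = _ := by ring
    · rw [abs_div, abs_neg, abs_of_pos hst, div_eq_mul_inv]; gcongr
    · have e : (-(μ2 - μ1) * σ - (x - μ) * (σ2 - σ1)) / σ ^ 2 =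
          (-(μ2 - μ1) - z * (σ2 - σ1)) * σ⁻¹ := by rw [hz]; field_simp
      rw [e, abs_mul, abs_mul, abs_of_pos hiw0, abs_of_pos (inv_pos.2 hst)]
      have e2 : |-(μ2 - μ1) - z * (σ2 - σ1)| ≤ D * (1 + |z|) := by
        calc _ ≤ |-(μ2 - μ1)| + |z * (σ2 - σ1)| := abs_sub _ _
          _ ≤ D + |z| * D := by rw [abs_neg, abs_mul]; gcongr
          _ = _ := by ring
      have hG := Real.exp_pos (-(γ * ell γ z))
      have e3 : (1 + |z|) * (1 / (1 + γ * z)) ≤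
          (1 + |ell γ z|) * (1 + Real.exp (-(γ * ell γ z))) := by
        rw [add_mul, one_mul]
        nlinarith
      calc _ ≤ 1 / (1 + γ * z) * (D * (1 + |z|) * S) := by gcongr
        _ = D * S * ((1 + |z|) * (1 / (1 + γ * z))) := by ring
        _ ≤ _ := by gcongr

lemma gevU_meas (γ : ℝ) : Measurable (gevU γ) := by
  unfold gevU
  by_cases h : γ = 0
  · simp only [h, if_true]; fun_prop
  · simp only [h, if_false]; fun_prop

lemma dens_meas (θ : ℝ × ℝ × ℝ) : Measurable (gevDensity θ) := by
  unfold gevDensity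
  have h := gevU_meas θ.1
  refine Measurable.ite (measurableSet_lt measurable_const (by fun_prop)) ?_ measurable_const
  fun_prop

/-- inverse of `ell γ` -/
noncomputable def psi (γ l : ℝ) : ℝ := if γ = 0 then l else (Real.exp (γ * l) - 1) / γ

lemma psi_w (γ l : ℝ) : 1 + γ * psi γ l = Real.exp (γ * l) := by
  unfold psi; split_ifs with h
  · simp [h]
  · field_simp; ring

lemma ell_psi (γ l : ℝ) : ell γ (psi γ l) = l := by
  by_cases h : γ = 0
  · simp [h, ell_zero, psi]
  · rw [ell_ne _ _ h, psi_w, Real.log_exp]; field_simp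

lemma psi_ell (γ z : ℝ) (hw : 0 < 1 + γ * z) : psi γ (ell γ z) = z := by
  by_cases h : γ = 0
  · simp [h, ell_zero, psi]
  · rw [psi, if_neg h, exp_ell _ _ hw]; field_simp; ring

lemma psi_deriv (γ l : ℝ) : HasDerivAt (psi γ) (Real.exp (γ * l)) l := by
  unfold psi
  by_cases h : γ = 0
  · simp only [h, if_true]; simpa using hasDerivAt_id' l
  · simp only [h, if_false]
    refine ((((hasDerivAt_id' l).const_mul γ).exp.sub_const 1).div_const γ).congr_deriv ?_
    field_simp

lemma psi_mono (γ : ℝ) : StrictMono (psi γ) :=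
  strictMono_of_hasDerivAt_pos (psi_deriv γ) (fun _ => Real.exp_pos _)

lemma ell_nonpos (γ z : ℝ) (hw : 0 < 1 + γ * z) (hz : z ≤ 0) : ell γ z ≤ 0 := by
  have h0 : psi γ 0 = 0 := by simp [psi]
  rw [← psi_ell γ z hw, ← h0] at hz
  exact (psi_mono γ).le_iff_le.1 hz

lemma lint_bd (f : ℝ → ℝ) (K1 K2 η : ℝ) (hη : 0 < η)
    (h1 : ∀ l < -1, f l ≤ K1 * Real.exp l) (h2 : ∀ l, -1 ≤ l → f l ≤ K2 * Real.exp (-η * l)) :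
    ∫⁻ l, ENNReal.ofReal (f l) < ⊤ := by
  rw [← lintegral_add_compl _ (measurableSet_Iio (a := (-1 : ℝ))), compl_Iio]
  refine ENNReal.add_lt_top.2 ⟨?_, ?_⟩
  · have hi : IntegrableOn (fun l => K1 * Real.exp l) (Iio (-1 : ℝ)) :=
      ((integrableOn_exp_Iic (-1)).mono_set Iio_subset_Iic_self).const_mul K1
    refine lt_of_le_of_lt (setLIntegral_mono' measurableSet_Iio ?_) hi.lintegral_lt_top
    intro l hl
    exact ENNReal.ofReal_le_ofReal (h1 l hl)
  · have hi : IntegrableOn (fun l => K2 * Real.exp (-η * l)) (Ici (-1 : ℝ)) :=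
      ((integrableOn_Ici_iff_integrableOn_Ioi (by simp)).2
        (integrableOn_exp_mul_Ioi (neg_lt_zero.2 hη) (-1))).const_mul K2
    refine lt_of_le_of_lt (setLIntegral_mono' measurableSet_Ici ?_) hi.lintegral_lt_top
    intro l hl
    exact ENNReal.ofReal_le_ofReal (h2 l hl)

noncomputable def md (C β : ℝ) (θ : ℝ × ℝ × ℝ) (x : ℝ) : ℝ :=
  if x < θ.2.1 + θ.2.2 * psi θ.1 (-1) then C * gevDensity θ x ^ (-(1/4) : ℝ)
  else C * gevDensity θ x ^ (-β)

lemma md_meas (C β : ℝ) (θ : ℝ × ℝ × ℝ) : Measurable (md C β θ) := by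
  unfold md
  have h := dens_meas θ
  refine Measurable.ite (measurableSet_lt measurable_id measurable_const) ?_ ?_ <;> fun_prop

lemma pl_sq (γ σ l C κ : ℝ) (hσ : 0 < σ) :
    σ * Real.exp (γ * l) * (pl γ σ l * (C * pl γ σ l ^ (-κ)) ^ 2) =
      C ^ 2 * (σ * σ⁻¹ ^ (1 - 2 * κ)) *
        Real.exp (γ * l + (1 - 2 * κ) * (-Real.exp (-l) - (γ + 1) * l)) := by
  have hp := pl_pos γ σ l hσ
  have h1 : pl γ σ l * (pl γ σ l ^ (-κ)) ^ 2 = pl γ σ l ^ (1 - 2 * κ) := by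
    rw [← Real.rpow_natCast, ← Real.rpow_mul hp.le]
    nth_rewrite 1 [← Real.rpow_one (pl γ σ l)]
    rw [← Real.rpow_add hp]; congr 1; push_cast; ring
  have h2 : pl γ σ l ^ (1 - 2 * κ) =
      σ⁻¹ ^ (1 - 2 * κ) * Real.exp ((1 - 2 * κ) * (-Real.exp (-l) - (γ + 1) * l)) := by
    unfold pl
    rw [Real.mul_rpow (by positivity) (by positivity), ← Real.exp_mul, mul_comm (1 - 2 * κ)]
  rw [mul_pow, Real.exp_add, show pl γ σ l * (C ^ 2 * (pl γ σ l ^ (-κ)) ^ 2) =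
    C ^ 2 * (pl γ σ l * (pl γ σ l ^ (-κ)) ^ 2) by ring, h1, h2]
  ring

lemma md_int (C β γ μ σ : ℝ) (hσ : 0 < σ) (hb : 2 * β * (γ + 1) < 1) :
    ∫⁻ x, ENNReal.ofReal (md C β (γ, μ, σ) x ^ 2) ∂(gevMeasure (γ, μ, σ)) < ⊤ := by
  unfold gevMeasure
  rw [lintegral_withDensity_eq_lintegral_mul _ (dens_meas _).ennreal_ofReal
    ((md_meas _ _ _).pow_const 2).ennreal_ofReal]
  have hz : ∀ l, (μ + σ * psi γ l - μ) / σ = psi γ l := fun l => by field_simp; ring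
  have hdl : ∀ l, gevDensity (γ, μ, σ) (μ + σ * psi γ l) = pl γ σ l := fun l => by
    rw [dens_eq _ _ _ _ hσ (by rw [hz, psi_w]; positivity), hz, ell_psi]
  have hmono : StrictMono (fun l => μ + σ * psi γ l) := fun a b hab => by
    have := mul_lt_mul_of_pos_left (psi_mono γ hab) hσ
    simpa using this
  have hs : Function.support ((fun x => ENNReal.ofReal (gevDensity (γ, μ, σ) x)) *
      fun x => ENNReal.ofReal (md C β (γ, μ, σ) x ^ 2)) ⊆ (fun l => μ + σ * psi γ l) '' univ := by
    intro x hx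
    have hpos : 0 < gevDensity (γ, μ, σ) x := by
      by_contra hcon
      apply hx
      simp [ENNReal.ofReal_of_nonpos (not_lt.1 hcon)]
    have hw := (dens_pos_iff _ _ _ _ hσ).1 hpos
    refine ⟨ell γ ((x - μ) / σ), mem_univ _, ?_⟩
    simp only [psi_ell _ _ hw]
    field_simp; ring
  rw [← setLIntegral_eq_of_support_subset hs,
    lintegral_image_eq_lintegral_abs_deriv_mul MeasurableSet.univ (f' := fun l => σ * Real.exp (γ * l))
      (fun l _ => (((psi_deriv γ l).const_mul σ).const_add μ).hasDerivWithinAt)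
      hmono.injective.injOn, setLIntegral_univ]
  have hE : ∀ l, ENNReal.ofReal |σ * Real.exp (γ * l)| *
      ((fun x => ENNReal.ofReal (gevDensity (γ, μ, σ) x)) *
      fun x => ENNReal.ofReal (md C β (γ, μ, σ) x ^ 2)) (μ + σ * psi γ l) =
      ENNReal.ofReal (σ * Real.exp (γ * l) * (pl γ σ l * md C β (γ, μ, σ) (μ + σ * psi γ l) ^ 2)) := by
    intro l
    have hp := pl_pos γ σ l hσ
    rw [abs_of_pos (by positivity), Pi.mul_apply, hdl, ← ENNReal.ofReal_mul hp.le,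
      ← ENNReal.ofReal_mul (by positivity)]
  simp_rw [hE]
  set K := 2 * |γ| + 2 with hK
  have hK0 : 0 < K := by positivity
  refine lint_bd _
    (C ^ 2 * (σ * σ⁻¹ ^ (1 - 2 * (1/4 : ℝ))) * Real.exp (K * Real.log (K / (1/2)) - K))
    (C ^ 2 * (σ * σ⁻¹ ^ (1 - 2 * β)) * Real.exp (|1 - 2 * β| * Real.exp 1))
    (1 - 2 * β * (γ + 1)) (by linarith) ?_ ?_
  · intro l hl
    have : μ + σ * psi γ l < μ + σ * psi γ (-1) := hmono hl
    simp only [md, this, if_true, hdl]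
    rw [pl_sq _ _ _ _ _ hσ, mul_assoc (C ^ 2 * _), ← Real.exp_add]
    refine mul_le_mul_of_nonneg_left (Real.exp_le_exp.2 ?_) (by positivity)
    have h := kt_bd K (1/2) (-l) hK0 (by norm_num)
    have := neg_abs_le γ
    have := le_abs_self γ
    nlinarith
  · intro l hl
    have : ¬ μ + σ * psi γ l < μ + σ * psi γ (-1) := not_lt.2 (hmono.monotone hl)
    simp only [md, this, if_false, hdl]
    rw [pl_sq _ _ _ _ _ hσ, mul_assoc (C ^ 2 * _), ← Real.exp_add]
    refine mul_le_mul_of_nonneg_left (Real.exp_le_exp.2 ?_) (by positivity)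
    have h1 : Real.exp (-l) ≤ Real.exp 1 := Real.exp_le_exp.2 (by linarith)
    have h2 : -(1 - 2 * β) * Real.exp (-l) ≤ |1 - 2 * β| * Real.exp 1 := by
      have := neg_le_abs (1 - 2 * β)
      have := Real.exp_pos (-l)
      calc _ ≤ |1 - 2 * β| * Real.exp (-l) := by gcongr
        _ ≤ _ := by gcongr
    nlinarith

lemma seg_lt (u v u0 t ε : ℝ) (hu : |u - u0| < ε) (hv : |v - u0| < ε) (ht : t ∈ Icc (0:ℝ) 1) :
    |u + t * (v - u) - u0| < ε := by
  rw [abs_lt] at *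
  obtain ⟨t0, t1⟩ := ht
  rcases t0.lt_or_eq with h | h
  · constructor <;> nlinarith
  · subst h; constructor <;> linarith

set_option maxHeartbeats 1000000 in
lemma main_aux (γ₀ μ₀ σ₀ : ℝ) (hγ : -(1/2) < γ₀) (hσ : 0 < σ₀) :
    ∃ (mdot : ℝ → ℝ) (ε : ℝ),
      Measurable mdot ∧ (∀ x, 0 ≤ mdot x) ∧
      (∫⁻ x, ENNReal.ofReal (mdot x ^ 2) ∂(gevMeasure (γ₀, μ₀, σ₀))) < ⊤ ∧
      0 < ε ∧
      ∀ θ₁ ∈ Metric.ball (γ₀, μ₀, σ₀) ε, ∀ θ₂ ∈ Metric.ball (γ₀, μ₀, σ₀) ε, ∀ x : ℝ,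
        0 < gevDensity (γ₀, μ₀, σ₀) x →
          |gevM (γ₀, μ₀, σ₀) θ₁ x - gevM (γ₀, μ₀, σ₀) θ₂ x| ≤ mdot x * ‖θ₁ - θ₂‖ := by
  set m := max (-γ₀) 0 with hm
  have hm0 : 0 ≤ m := le_max_right _ _
  have hm1 : -γ₀ ≤ m := le_max_left _ _
  have hm2 : m < 1/2 := max_lt (by linarith) (by norm_num)
  set δ := (1/2 - m) / 8 with hδ
  have hδ0 : 0 < δ := by rw [hδ]; linarith
  set b := m + 4 * δ with hbdef
  have hb0 : 0 < b := by positivity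
  have hb2 : b < 1/2 := by rw [hbdef, hδ]; linarith
  set β := b / (γ₀ + 1) with hβ
  have hγ1 : 0 < γ₀ + 1 := by linarith
  have hβ0 : 0 < β := by positivity
  have hβb : β * (γ₀ + 1) = b := by rw [hβ]; field_simp
  have hβ1 : β < 1 := by nlinarith
  set Γ := |γ₀| + 1 with hΓ
  have hΓ0 : 0 ≤ Γ := by positivity
  set ρ := -(σ₀ * psi γ₀ (-1)) with hρ
  have hρ0 : 0 < ρ := by
    have h := psi_mono γ₀ (show (-1 : ℝ) < 0 by norm_num)
    have h0 : psi γ₀ 0 = 0 := by simp [psi]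
    rw [h0] at h
    rw [hρ]; nlinarith
  obtain ⟨C1, hC1, hA1⟩ := bdA (1/4) (σ₀/2) Γ (by norm_num) (by positivity) hΓ0
  obtain ⟨C2, hC2, hA2⟩ := bdA β (σ₀/2) Γ hβ0 (by positivity) hΓ0
  obtain ⟨C3, hC3, hB⟩ := bdB β (σ₀/2) δ hβ0 (by positivity) hδ0
  set C := C1 + C2 + C3 with hC
  have hC0 : 0 < C := by positivity
  set ε := min δ (min (σ₀/2) ρ) with hε
  have hε0 : 0 < ε := by positivity
  have hε1 : ε ≤ δ := min_le_left _ _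
  have hε2 : ε ≤ σ₀/2 := (min_le_right _ _).trans (min_le_left _ _)
  have hε3 : ε ≤ ρ := (min_le_right _ _).trans (min_le_right _ _)
  set S := (σ₀/2)⁻¹ with hS
  have hS0 : 0 < S := by positivity
  set L := 2 * ((Γ + 2) + (2 * Γ + 3) * S) with hL
  have hL0 : 0 < L := by positivity
  have hmd0 : ∀ x, 0 ≤ md (L * C) β (γ₀, μ₀, σ₀) x := by
    intro x
    have := dens_nonneg γ₀ μ₀ σ₀ x hσ
    unfold md; split_ifs <;> positivity
  refine ⟨md (L * C) β (γ₀, μ₀, σ₀), ε, md_meas _ _ _, hmd0, ?_, hε0, ?_⟩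
  · exact md_int _ _ _ _ _ hσ (by nlinarith)
  -- pointwise bound, on the box
  have key : ∀ x, 0 < gevDensity (γ₀, μ₀, σ₀) x → ∀ γ μ σ, |γ - γ₀| < ε → |μ - μ₀| < ε →
      |σ - σ₀| < ε → 0 < 1 + γ * ((x - μ) / σ) →
      TT γ (ell γ ((x - μ) / σ)) * pl γ σ (ell γ ((x - μ) / σ)) ≤
        (md (L * C) β (γ₀, μ₀, σ₀) x / L) *
          (pl γ σ (ell γ ((x - μ) / σ)) + gevDensity (γ₀, μ₀, σ₀) x) := by
    intro x hq γ μ σ h1 h2 h3 hw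
    rw [abs_lt] at h1 h2 h3
    have hσ1 : σ₀/2 ≤ σ := by linarith
    have hσ2 : 0 < σ := by linarith
    have hΓ1 : |γ| ≤ Γ := by
      have := le_abs_self γ₀
      have := neg_abs_le γ₀
      rw [abs_le]; constructor <;> linarith
    have hp := pl_pos γ σ (ell γ ((x - μ) / σ)) hσ2
    by_cases hx : x < μ₀ + σ₀ * psi γ₀ (-1)
    · have e : md (L * C) β (γ₀, μ₀, σ₀) x / L = C * gevDensity (γ₀, μ₀, σ₀) x ^ (-(1/4) : ℝ) := by
        simp only [md, hx, if_true]; field_simp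
      rw [e]
      refine interp _ _ _ _ _ hp hq (by norm_num) (by norm_num) hC0.le ?_
      refine (hA1 γ σ _ hΓ1 hσ1 (ell_nonpos _ _ hw ?_)).trans (by linarith)
      apply div_nonpos_of_nonpos_of_nonneg _ hσ2.le
      linarith
    · have e : md (L * C) β (γ₀, μ₀, σ₀) x / L = C * gevDensity (γ₀, μ₀, σ₀) x ^ (-β) := by
        simp only [md, hx, if_false]; field_simp
      rw [e]
      refine interp _ _ _ _ _ hp hq hβ0.le hβ1.le hC0.le ?_
      rcases le_total (ell γ ((x - μ) / σ)) 0 with hl | hl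
      · exact (hA2 γ σ _ hΓ1 hσ1 hl).trans (by linarith)
      · have hbb : b - ε ≤ β * (γ + 1) := by nlinarith
        exact (hB γ σ _ (by linarith) (by linarith) hσ1 hl).trans (by linarith)
  rintro ⟨γ1, μ1, σ1⟩ hθ1 ⟨γ2, μ2, σ2⟩ hθ2 x hq
  simp only [Metric.mem_ball, Prod.dist_eq, Real.dist_eq, max_lt_iff] at hθ1 hθ2
  obtain ⟨a1, a2, a3⟩ := hθ1
  obtain ⟨b1, b2, b3⟩ := hθ2
  set D := ‖(γ1, μ1, σ1) - (γ2, μ2, σ2)‖ with hD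
  have hDe : D = max |γ1 - γ2| (max |μ1 - μ2| |σ1 - σ2|) := by
    simp [hD, Prod.norm_def]
  have d1 : |γ1 - γ2| ≤ D := by rw [hDe]; exact le_max_left _ _
  have d2 : |μ1 - μ2| ≤ D := by rw [hDe]; exact (le_max_left _ _).trans (le_max_right _ _)
  have d3 : |σ1 - σ2| ≤ D := by rw [hDe]; exact (le_max_right _ _).trans (le_max_right _ _)
  have key := key x hq
  have hmd := hmd0 x
  set M := md (L * C) β (γ₀, μ₀, σ₀) x / L with hM
  have hM0 : 0 ≤ M := by positivity
  set q := gevDensity (γ₀, μ₀, σ₀) x with hqdef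
  have hseg : ∀ (u v u0 t : ℝ), |u - u0| < ε → |v - u0| < ε → t ∈ Icc (0:ℝ) 1 →
      |u + t * (v - u) - u0| < ε :=
    fun u v u0 t => seg_lt u v u0 t ε
  have hgam : ∀ γ, |γ - γ₀| < ε → |γ| ≤ Γ ∧ -(1/2) < γ := by
    intro γ h
    have := le_abs_self γ₀
    have := neg_abs_le γ₀
    rw [abs_lt] at h
    rw [abs_le]; refine ⟨⟨?_, ?_⟩, ?_⟩ <;> linarith
  have hσl : ∀ σ, |σ - σ₀| < ε → σ₀/2 < σ := by
    intro σ h; rw [abs_lt] at h; linarith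
  have sms := step_ms x γ1 μ2 μ1 σ2 σ1 q M Γ D S (hgam γ1 a1).2 (hgam γ1 a1).1
    (fun t ht => by have := hσl _ (hseg _ _ _ t b3 a3 ht); linarith)
    (fun t ht => by
      have := hσl _ (hseg _ _ _ t b3 a3 ht)
      rw [hS]; gcongr) d2 d3 hq hM0
    (by
      rintro t ht μ σ rfl rfl hw
      exact key γ1 _ _ a1 (hseg _ _ _ t b2 a2 ht) (hseg _ _ _ t b3 a3 ht) hw)
  have sg0 : ∀ g1 g2, |g1 - γ₀| < ε → |g2 - γ₀| < ε → g1 ≤ g2 →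
      |Real.log ((gevDensity (g2, μ2, σ2) x + q) / (2 * q)) -
      Real.log ((gevDensity (g1, μ2, σ2) x + q) / (2 * q))| ≤ (Γ + 2) * M * (g2 - g1) := by
    intro g1 g2 h1 h2 h12
    have hin : ∀ γ ∈ Icc g1 g2, |γ - γ₀| < ε := by
      intro γ hγ
      rw [abs_lt] at *
      exact ⟨by linarith [hγ.1], by linarith [hγ.2]⟩
    exact step_g x μ2 σ2 g1 g2 q M Γ h12 (by linarith [hσl _ b3]) (hgam _ h1).2 hΓ0
      (fun γ hγ => (hgam γ (hin γ hγ)).1) hq hM0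
      (fun γ hγ hw => key γ μ2 σ2 (hin γ hγ) b2 b3 hw)
  have sg : |Real.log ((gevDensity (γ1, μ2, σ2) x + q) / (2 * q)) -
      Real.log ((gevDensity (γ2, μ2, σ2) x + q) / (2 * q))| ≤ (Γ + 2) * M * D := by
    rcases le_total γ1 γ2 with h | h
    · rw [abs_sub_comm]
      refine (sg0 γ1 γ2 a1 b1 h).trans ?_
      gcongr
      rw [abs_sub_comm] at d1
      exact (le_abs_self _).trans d1
    · refine (sg0 γ2 γ1 b1 a1 h).trans ?_
      gcongr
      exact (le_abs_self _).trans d1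
  have e : md (L * C) β (γ₀, μ₀, σ₀) x = L * M := by rw [hM]; field_simp
  rw [e]
  unfold gevM
  rw [← mul_sub, abs_mul, abs_of_pos (by norm_num : (0:ℝ) < 2)]
  have tri := abs_sub_le (Real.log ((gevDensity (γ1, μ1, σ1) x + q) / (2 * q)))
    (Real.log ((gevDensity (γ1, μ2, σ2) x + q) / (2 * q)))
    (Real.log ((gevDensity (γ2, μ2, σ2) x + q) / (2 * q)))
  rw [hL]
  linarith

/-- **Lipschitz property of `m_θ`** for the GEV family at `θ₀ = (γ₀, μ₀, σ₀)` with
`γ₀ > −1/2`, `σ₀ > 0`: there are a measurable `ṁ ≥ 0` with `∫ ṁ² dP_{θ₀} < ∞` and a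
neighbourhood `V` of `θ₀` such that `|m_{θ₁}(x) − m_{θ₂}(x)| ≤ ṁ(x) ‖θ₁ − θ₂‖` for all
`θ₁, θ₂ ∈ V` and all `x` with `p_{θ₀}(x) > 0`. -/
theorem gev_m_lipschitz (θ₀ : ℝ × ℝ × ℝ) (hγ : -(1/2) < θ₀.1) (hσ : 0 < θ₀.2.2) :
    ∃ (mdot : ℝ → ℝ) (ε : ℝ),
      Measurable mdot ∧ (∀ x, 0 ≤ mdot x) ∧
      (∫⁻ x, ENNReal.ofReal (mdot x ^ 2) ∂(gevMeasure θ₀)) < ⊤ ∧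
      0 < ε ∧
      ∀ θ₁ ∈ Metric.ball θ₀ ε, ∀ θ₂ ∈ Metric.ball θ₀ ε, ∀ x : ℝ,
        0 < gevDensity θ₀ x →
          |gevM θ₀ θ₁ x - gevM θ₀ θ₂ x| ≤ mdot x * ‖θ₁ - θ₂‖ := by
  exact main_aux θ₀.1 θ₀.2.1 θ₀.2.2 hγ hσ
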